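/- arXiv:1204.3573 — 3 statements merged into one kernel-verified Lean document; each statement's English description precedes it below -/
import Mathlib

section
/- Let K : ℝ^d → ℂ be a continuous function in L¹(ℝ^d) whose Fourier transform satisfies K̂(z) ≥ a / (1 + b‖z‖^{γ₁})^{γ₂} for all z ∈ ℝ^d, for some constants a, b, γ₁, γ₂ > 0. Then for every subset C ⊆ ℝ^d that is closed with respect to the Euclidean metric and every point x ∈ ℝ^d with x ∉ C, there exists a smooth compactly supported function φ ∈ C_c^∞(ℝ^d) such that φ(x) ≠ 0, φ(y) = 0 for all y ∈ C, and ∫_{ℝ^d} K̂(z)^{−1} |φ̂(z)|² dz < ∞ (so that φ belongs to the reproducing kernel Hilbert space of the translation-invariant kernel K(x − y), and in particular that kernel is completely separating). -/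
open MeasureTheory
open scoped FourierTransform ComplexOrder

/-!
For a complex-valued bump function `φ` around `x` supported off `C`, the Fourier transform of `φ`
is a Schwartz function. The lower bound on `K̂` says that `1 / K̂` grows at most like a power of
`1 + ‖z‖ ^ 2`, and half of this power can be absorbed into `φ̂` without leaving the Schwartz space,
so `∫ |φ̂|² / K̂` is dominated by the squared `L²` norm of a Schwartz function.
-/

open scoped ContDiff SchwartzMap

section PolynomialGrowth

variable {a b γ₁ γ₂ t : ℝ}

lemma rpow_le_one_add_sq_rpow_half (hγ₁ : 0 ≤ γ₁) (ht : 0 ≤ t) :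
    t ^ γ₁ ≤ (1 + t ^ 2) ^ (γ₁ / 2) := by
  rw [Real.rpow_div_two_eq_sqrt γ₁ (by positivity)]
  exact Real.rpow_le_rpow ht (Real.le_sqrt_of_sq_le (by linarith)) hγ₁

lemma one_add_mul_rpow_rpow_le (hb : 0 ≤ b) (hγ₁ : 0 ≤ γ₁) (hγ₂ : 0 ≤ γ₂) (ht : 0 ≤ t) :
    (1 + b * t ^ γ₁) ^ γ₂ ≤ (1 + b) ^ γ₂ * (1 + t ^ 2) ^ (γ₁ / 2 * γ₂) := by
  have one_le : 1 ≤ (1 + t ^ 2) ^ (γ₁ / 2) :=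
    Real.one_le_rpow (by linarith [sq_nonneg t]) (by positivity)
  have base_le : 1 + b * t ^ γ₁ ≤ (1 + b) * (1 + t ^ 2) ^ (γ₁ / 2) :=
    calc 1 + b * t ^ γ₁ ≤ (1 + t ^ 2) ^ (γ₁ / 2) + b * (1 + t ^ 2) ^ (γ₁ / 2) := by
          gcongr
          exact rpow_le_one_add_sq_rpow_half hγ₁ ht
      _ = (1 + b) * (1 + t ^ 2) ^ (γ₁ / 2) := by ring
  calc (1 + b * t ^ γ₁) ^ γ₂ ≤ ((1 + b) * (1 + t ^ 2) ^ (γ₁ / 2)) ^ γ₂ := by gcongr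
    _ = (1 + b) ^ γ₂ * (1 + t ^ 2) ^ (γ₁ / 2 * γ₂) := by
      rw [Real.mul_rpow (by positivity) (by positivity), ← Real.rpow_mul (by positivity)]

lemma abs_inv_le_of_div_one_add_mul_rpow_rpow_le {k : ℝ} (ha : 0 < a) (hb : 0 ≤ b)
    (hγ₁ : 0 ≤ γ₁) (hγ₂ : 0 ≤ γ₂) (ht : 0 ≤ t) (hk : a / (1 + b * t ^ γ₁) ^ γ₂ ≤ k) :
    |k⁻¹| ≤ (1 + b) ^ γ₂ / a * (1 + t ^ 2) ^ (γ₁ / 2 * γ₂) := by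
  have lower_pos : 0 < a / (1 + b * t ^ γ₁) ^ γ₂ := by positivity
  calc |k⁻¹| = k⁻¹ := abs_of_pos (inv_pos.2 (lower_pos.trans_le hk))
    _ ≤ (a / (1 + b * t ^ γ₁) ^ γ₂)⁻¹ := inv_anti₀ lower_pos hk
    _ = (1 + b * t ^ γ₁) ^ γ₂ / a := inv_div _ _
    _ ≤ (1 + b) ^ γ₂ * (1 + t ^ 2) ^ (γ₁ / 2 * γ₂) / a := by
      gcongr
      exact one_add_mul_rpow_rpow_le hb hγ₁ hγ₂ ht
    _ = (1 + b) ^ γ₂ / a * (1 + t ^ 2) ^ (γ₁ / 2 * γ₂) := by ring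

end PolynomialGrowth

section SchwartzSpace

variable {E F : Type*} [NormedAddCommGroup E] [InnerProductSpace ℝ E] [MeasurableSpace E]
  [BorelSpace E] [NormedAddCommGroup F] [NormedSpace ℝ F] [SecondCountableTopologyEither E F]
  {μ : Measure E} [μ.HasTemperateGrowth]

lemma integrable_one_add_norm_sq_rpow_mul_norm_pow (g : 𝓢(E, F)) (r : ℝ) {p : ℕ} (hp : p ≠ 0) :
    Integrable (fun z => (1 + ‖z‖ ^ 2) ^ r * ‖g z‖ ^ p) μ := by
  let h : 𝓢(E, F) := SchwartzMap.smulLeftCLM F (fun z : E => (1 + ‖z‖ ^ 2) ^ (r / p)) g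
  have norm_h_pow (z : E) : ‖h z‖ ^ p = (1 + ‖z‖ ^ 2) ^ r * ‖g z‖ ^ p := by
    rw [SchwartzMap.smulLeftCLM_apply_apply (by fun_prop), norm_smul, mul_pow,
      Real.norm_of_nonneg (by positivity), ← Real.rpow_mul_natCast (by positivity),
      div_mul_cancel₀ r (Nat.cast_ne_zero.2 hp)]
  simpa only [norm_h_pow] using (h.memLp p μ).integrable_norm_pow hp

lemma integrable_mul_norm_pow_of_abs_le {w : E → ℝ} (hw : AEStronglyMeasurable w μ) {M r : ℝ}
    (hbound : ∀ᵐ z ∂μ, |w z| ≤ M * (1 + ‖z‖ ^ 2) ^ r) (g : 𝓢(E, F)) {p : ℕ} (hp : p ≠ 0) :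
    Integrable (fun z => w z * ‖g z‖ ^ p) μ := by
  refine ((integrable_one_add_norm_sq_rpow_mul_norm_pow g r hp).const_mul M).mono'
    (hw.mul (g.continuous.norm.pow p).aestronglyMeasurable) ?_
  filter_upwards [hbound] with z hz
  calc ‖w z * ‖g z‖ ^ p‖ = |w z| * ‖g z‖ ^ p := by
        rw [norm_mul, norm_pow, norm_norm, Real.norm_eq_abs]
    _ ≤ M * (1 + ‖z‖ ^ 2) ^ r * ‖g z‖ ^ p := by gcongr
    _ = M * ((1 + ‖z‖ ^ 2) ^ r * ‖g z‖ ^ p) := mul_assoc _ _ _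

end SchwartzSpace

lemma exists_contDiff_hasCompactSupport_eq_of_notMem_isClosed {E F : Type*}
    [NormedAddCommGroup E] [NormedSpace ℝ E] [FiniteDimensional ℝ E] [NormedAddCommGroup F]
    [NormedSpace ℝ F] {C : Set E} (hC : IsClosed C) {x : E} (hx : x ∉ C) (v : F) :
    ∃ φ : E → F, ContDiff ℝ ∞ φ ∧ HasCompactSupport φ ∧ φ x = v ∧ ∀ y ∈ C, φ y = 0 := by
  obtain ⟨f, hf_support, hf_compact, hf_smooth, -, hfx⟩ :=
    exists_contDiff_tsupport_subset (n := (⊤ : ℕ∞)) (hC.isOpen_compl.mem_nhds hx)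
  refine ⟨fun y => f y • v, hf_smooth.smul contDiff_const, hf_compact.smul_right,
    by simp only [hfx, one_smul], fun y hy => ?_⟩
  have hfy : f y = 0 := image_eq_zero_of_notMem_tsupport fun hy' => hf_support hy' hy
  simp only [hfy, zero_smul]

section FourierTransform

variable {V : Type*} [NormedAddCommGroup V] [InnerProductSpace ℝ V] [FiniteDimensional ℝ V]
  [MeasurableSpace V] [BorelSpace V]

lemma continuous_fourier_of_integrable {F : Type*} [NormedAddCommGroup F] [NormedSpace ℂ F]
    {f : V → F} (hf : Integrable f) : Continuous (𝓕 f) :=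
  VectorFourier.fourierIntegral_continuous Real.continuous_fourierChar
    (L := innerₗ V) continuous_inner hf

theorem exists_contDiff_separating_integrable_mul_norm_fourier_sq {w : V → ℝ}
    (hw : AEStronglyMeasurable w) {M r : ℝ} (hbound : ∀ᵐ z, |w z| ≤ M * (1 + ‖z‖ ^ 2) ^ r)
    {C : Set V} (hC : IsClosed C) {x : V} (hx : x ∉ C) :
    ∃ φ : V → ℂ, ContDiff ℝ ∞ φ ∧ HasCompactSupport φ ∧ φ x ≠ 0 ∧ (∀ y ∈ C, φ y = 0) ∧
      Integrable (fun z => w z * ‖𝓕 φ z‖ ^ 2) := by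
  obtain ⟨φ, hφ_smooth, hφ_compact, hφx, hφC⟩ :=
    exists_contDiff_hasCompactSupport_eq_of_notMem_isClosed hC hx (1 : ℂ)
  exact ⟨φ, hφ_smooth, hφ_compact, hφx ▸ one_ne_zero, hφC,
    integrable_mul_norm_pow_of_abs_le hw hbound (𝓕 (hφ_compact.toSchwartzMap hφ_smooth))
      two_ne_zero⟩

theorem stmt_12_general {K : V → ℂ} (hint : Integrable K) {a b γ₁ γ₂ : ℝ} (ha : 0 < a)
    (hb : 0 ≤ b) (hγ₁ : 0 ≤ γ₁) (hγ₂ : 0 ≤ γ₂)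
    (hlb : ∀ z, ((a / (1 + b * ‖z‖ ^ γ₁) ^ γ₂ : ℝ) : ℂ) ≤ 𝓕 K z)
    {C : Set V} (hC : IsClosed C) {x : V} (hx : x ∉ C) :
    ∃ φ : V → ℂ, ContDiff ℝ ∞ φ ∧ HasCompactSupport φ ∧ φ x ≠ 0 ∧ (∀ y ∈ C, φ y = 0) ∧
      Integrable (fun z => (𝓕 K z).re⁻¹ * ‖𝓕 φ z‖ ^ 2) := by
  have inv_measurable : Measurable fun z => (𝓕 K z).re⁻¹ :=
    (Complex.continuous_re.comp (continuous_fourier_of_integrable hint)).measurable.inv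
  have inv_le (z : V) :
      |(𝓕 K z).re⁻¹| ≤ (1 + b) ^ γ₂ / a * (1 + ‖z‖ ^ 2) ^ (γ₁ / 2 * γ₂) :=
    abs_inv_le_of_div_one_add_mul_rpow_rpow_le ha hb hγ₁ hγ₂ (norm_nonneg z)
      (Complex.le_def.1 (hlb z)).1
  exact exists_contDiff_separating_integrable_mul_norm_fourier_sq
    inv_measurable.aestronglyMeasurable (.of_forall inv_le) hC hx

end FourierTransform

/-- Let `K : ℝ^d → ℂ` be a continuous function in `L¹(ℝ^d)` whose Fourier
transform satisfies `K̂(z) ≥ a / (1 + b‖z‖^{γ₁})^{γ₂}` for all `z`, for constants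
`a, b, γ₁, γ₂ > 0`.  Then for every Euclidean-closed `C ⊆ ℝ^d` and every `x ∉ C` there is a
smooth compactly supported `φ ∈ C_c^∞(ℝ^d)` with `φ(x) ≠ 0`, `φ ≡ 0` on `C`, and
`∫ K̂(z)^{−1} |φ̂(z)|² dz < ∞` (so `φ` belongs to the RKHS of the translation-invariant
kernel `K(x−y)`; in particular that kernel is completely separating). -/
theorem stmt_12 {d : ℕ} (K : EuclideanSpace ℝ (Fin d) → ℂ)
    (hcont : Continuous K) (hint : Integrable K)
    (a b γ₁ γ₂ : ℝ) (ha : 0 < a) (hb : 0 < b) (hγ₁ : 0 < γ₁) (hγ₂ : 0 < γ₂)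
    (hlb : ∀ z : EuclideanSpace ℝ (Fin d),
      ((a / (1 + b * ‖z‖ ^ γ₁) ^ γ₂ : ℝ) : ℂ) ≤ 𝓕 K z)
    (C : Set (EuclideanSpace ℝ (Fin d))) (hC : IsClosed C)
    (x : EuclideanSpace ℝ (Fin d)) (hx : x ∉ C) :
    ∃ φ : EuclideanSpace ℝ (Fin d) → ℂ,
      ContDiff ℝ (⊤ : ℕ∞) φ ∧ HasCompactSupport φ ∧
      φ x ≠ 0 ∧ (∀ y ∈ C, φ y = 0) ∧
      Integrable (fun z => (𝓕 K z).re⁻¹ * ‖𝓕 φ z‖ ^ 2) := by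
  exact stmt_12_general hint ha hb.le hγ₁.le hγ₂.le hlb hC hx
end

section
/- For every dimension d ≥ 1 and every σ > 0, the Abel kernel K : ℝ^d × ℝ^d → ℝ defined by K(x,y) = exp(−‖x − y‖/σ), where ‖·‖ is the Euclidean norm, is a kernel of positive type: for all N ∈ ℕ, all x_1, …, x_N ∈ ℝ^d and all c_1, …, c_N ∈ ℂ, Σ_{i,j=1}^N c_i conj(c_j) exp(−‖x_j − x_i‖/σ) is a nonnegative real number. -/
open scoped ComplexOrder

/-!
The Abel kernel is a mixture of Gaussian kernels. For `s ≥ 0` one has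
`(√π / 2) e^{-s} = ∫ t in (0, ∞), e^{-t²} e^{-(s / (2 t))²}`, so that averaging the kernels
`e^{-‖x - y‖² / (2 σ t)²}` over `t` gives `e^{-‖x - y‖ / σ}`. Each Gaussian kernel is of positive
type because it is the characteristic function of a Gaussian measure evaluated at differences: such
a kernel is itself an average of the rank-one kernels `e^{i⟪w, x⟫} conj (e^{i⟪w, y⟫})`.

The integral is computed by the Cauchy–Schlömilch substitution `u = t - r / t`, which completes the
square in `t² + (r / t)² = (t - r / t)² + 2 r`.
-/

open MeasureTheory ProbabilityTheory Set Matrix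

section CauchySchlomilch

variable {r : ℝ}

lemma hasDerivAt_sub_const_div (r : ℝ) {x : ℝ} (hx : x ≠ 0) :
    HasDerivAt (fun x ↦ x - r / x) (1 + r / x ^ 2) x := by
  simpa [div_eq_mul_inv] using (hasDerivAt_id' x).fun_sub ((hasDerivAt_inv hx).const_mul r)

lemma monotoneOn_sub_const_div_Ioi (hr : 0 ≤ r) :
    MonotoneOn (fun x ↦ x - r / x) (Ioi 0) := fun _ hx _ _ hxy ↦
  sub_le_sub hxy (div_le_div_of_nonneg_left hr hx hxy)

lemma image_sub_const_div_Ioi (hr : 0 < r) : (fun x ↦ x - r / x) '' Ioi 0 = univ := by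
  refine eq_univ_of_forall fun y ↦ ?_
  have hdisc : √(y ^ 2 + 4 * r) ^ 2 = y ^ 2 + 4 * r := Real.sq_sqrt (by positivity)
  have hroot : 0 < y + √(y ^ 2 + 4 * r) := by
    have : |y| < √(y ^ 2 + 4 * r) := Real.lt_sqrt_of_sq_lt (by rw [sq_abs]; linarith)
    linarith [neg_abs_le y]
  refine ⟨(y + √(y ^ 2 + 4 * r)) / 2, half_pos hroot, ?_⟩
  field_simp
  linear_combination hdisc

variable {E : Type*} [NormedAddCommGroup E] [NormedSpace ℝ E]

lemma integral_Ioi_comp_sub_const_div (hr : 0 < r) (f : ℝ → E) :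
    ∫ x in Ioi 0, (1 + r / x ^ 2) • f (x - r / x) = ∫ x, f x := by
  rw [← setIntegral_univ (f := f), ← image_sub_const_div_Ioi hr]
  exact (integral_image_eq_integral_deriv_smul_of_monotoneOn measurableSet_Ioi
    (fun x hx ↦ (hasDerivAt_sub_const_div r (ne_of_gt hx)).hasDerivWithinAt)
    (monotoneOn_sub_const_div_Ioi hr.le) f).symm

lemma integrableOn_Ioi_comp_sub_const_div (hr : 0 < r) {f : ℝ → E} (hf : Integrable f) :
    IntegrableOn (fun x ↦ (1 + r / x ^ 2) • f (x - r / x)) (Ioi 0) := by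
  rw [← integrableOn_univ, ← image_sub_const_div_Ioi hr] at hf
  exact (integrableOn_image_iff_integrableOn_deriv_smul_of_monotoneOn measurableSet_Ioi
    (fun x hx ↦ (hasDerivAt_sub_const_div r (ne_of_gt hx)).hasDerivWithinAt)
    (monotoneOn_sub_const_div_Ioi hr.le) f).1 hf

lemma integral_Ioi_comp_const_div (hr : 0 < r) (f : ℝ → E) :
    ∫ x in Ioi 0, (r / x ^ 2) • f (r / x) = ∫ x in Ioi 0, f x := by
  have himage : (fun x ↦ r / x) '' Ioi 0 = Ioi 0 := by
    ext y
    refine ⟨?_, fun hy ↦ ⟨r / y, div_pos hr hy, div_div_cancel₀ hr.ne'⟩⟩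
    rintro ⟨x, hx, rfl⟩
    exact div_pos hr hx
  have hderiv (x : ℝ) (hx : x ∈ Ioi 0) :
      HasDerivWithinAt (fun x ↦ r / x) (-(r / x ^ 2)) (Ioi 0) x := by
    simpa [div_eq_mul_inv] using ((hasDerivAt_inv (ne_of_gt hx)).const_mul r).hasDerivWithinAt
  have hanti : AntitoneOn (fun x ↦ r / x) (Ioi 0) := fun _ hx _ _ hxy ↦
    div_le_div_of_nonneg_left hr.le hx hxy
  simpa [himage] using
    (integral_image_eq_integral_deriv_smul_of_antitoneOn measurableSet_Ioi hderiv hanti f).symm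

/-- The **Cauchy–Schlömilch transformation**. -/
theorem two_smul_integral_Ioi_comp_sub_const_div (hr : 0 < r) {f : ℝ → E} (hf : Integrable f)
    (hf_even : Function.Even f) :
    (2 : ℝ) • ∫ x in Ioi 0, f (x - r / x) = ∫ x, f x := by
  have hint := integrableOn_Ioi_comp_sub_const_div hr hf
  have hint_one : IntegrableOn (fun x ↦ f (x - r / x)) (Ioi 0) := by
    have hmeas : Measurable fun x : ℝ ↦ (1 + r / x ^ 2)⁻¹ := by fun_prop
    refine (hint.bdd_smul 1 hmeas.aestronglyMeasurable ?_).congr ?_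
    · refine ae_of_all _ fun x ↦ ?_
      rw [Real.norm_of_nonneg (by positivity)]
      exact inv_le_one_of_one_le₀ (le_add_of_nonneg_right (by positivity))
    · exact ae_of_all _ fun x ↦ inv_smul_smul₀ (by positivity) _
  have hint_div : IntegrableOn (fun x ↦ (r / x ^ 2) • f (x - r / x)) (Ioi 0) :=
    (hint.sub hint_one).congr (ae_of_all _ fun x ↦ by simp [add_smul])
  have hflip : ∫ x in Ioi 0, (r / x ^ 2) • f (x - r / x) = ∫ x in Ioi 0, f (x - r / x) := by
    rw [← integral_Ioi_comp_const_div hr fun x ↦ f (x - r / x)]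
    congr with x
    rw [div_div_cancel₀ hr.ne', ← hf_even, neg_sub]
  calc (2 : ℝ) • ∫ x in Ioi 0, f (x - r / x)
      = (∫ x in Ioi 0, f (x - r / x)) + ∫ x in Ioi 0, (r / x ^ 2) • f (x - r / x) := by
        rw [hflip, two_smul]
    _ = ∫ x in Ioi 0, (1 + r / x ^ 2) • f (x - r / x) := by
        simp only [add_smul, one_smul, integral_add hint_one hint_div]
    _ = ∫ x, f x := integral_Ioi_comp_sub_const_div hr f

end CauchySchlomilch

lemma integrable_exp_neg_sq_add_div_sq (r : ℝ) :
    Integrable fun t : ℝ ↦ Real.exp (-(t ^ 2 + (r / t) ^ 2)) := by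
  refine (integrable_exp_neg_mul_sq one_pos).mono' (by fun_prop) (ae_of_all _ fun t ↦ ?_)
  rw [Real.norm_of_nonneg (Real.exp_nonneg _), Real.exp_le_exp]
  linarith [sq_nonneg (r / t)]

lemma integral_Ioi_exp_neg_sq_add_div_sq {r : ℝ} (hr : 0 ≤ r) :
    ∫ t in Ioi (0 : ℝ), Real.exp (-(t ^ 2 + (r / t) ^ 2)) = √Real.pi / 2 * Real.exp (-(2 * r)) := by
  rcases hr.eq_or_lt with rfl | hr
  · simpa using integral_gaussian_Ioi 1
  have hsquare : ∀ t ∈ Ioi (0 : ℝ), Real.exp (-(t ^ 2 + (r / t) ^ 2)) =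
      Real.exp (-1 * (t - r / t) ^ 2) * Real.exp (-(2 * r)) := fun t (ht : 0 < t) ↦ by
    rw [← Real.exp_add]
    congr 1
    field_simp
    ring
  have hsubst := two_smul_integral_Ioi_comp_sub_const_div hr (integrable_exp_neg_mul_sq one_pos)
    fun t ↦ by rw [neg_sq]
  rw [integral_gaussian, div_one, smul_eq_mul] at hsubst
  rw [setIntegral_congr_fun measurableSet_Ioi hsquare, integral_mul_const, ← hsubst,
    mul_div_cancel_left₀ _ two_ne_zero]

section PosSemidef

variable {n : Type*}

lemma posSemidef_integral {𝕜 α : Type*} [RCLike 𝕜] {mα : MeasurableSpace α} {μ : Measure α}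
    {M : α → Matrix n n 𝕜} (hint : ∀ i j, Integrable (fun a ↦ M a i j) μ)
    (hM : ∀ᵐ a ∂μ, (M a).PosSemidef) :
    (Matrix.of fun i j ↦ ∫ a, M a i j ∂μ).PosSemidef := by
  refine ⟨IsHermitian.ext fun i j ↦ ?_, fun x ↦ ?_⟩
  · rw [of_apply, of_apply, RCLike.star_def, ← integral_conj]
    exact integral_congr_ae (hM.mono fun a ha ↦ ha.isHermitian.apply i j)
  · have hterm (i j : n) : Integrable (fun a ↦ star (x i) * M a i j * x j) μ :=
      ((hint i j).const_mul _).mul_const _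
    have hsum : (x.sum fun i xi ↦ x.sum fun j xj ↦ star xi * (∫ a, M a i j ∂μ) * xj) =
        ∫ a, x.sum fun i xi ↦ x.sum fun j xj ↦ star xi * M a i j * xj ∂μ := by
      simp only [Finsupp.sum]
      rw [integral_finsetSum _ fun i _ ↦ integrable_finsetSum _ fun j _ ↦ hterm i j]
      refine Finset.sum_congr rfl fun i _ ↦ ?_
      rw [integral_finsetSum _ fun j _ ↦ hterm i j]
      simp only [integral_mul_const, integral_const_mul]
    simp only [of_apply]
    rw [hsum]
    exact integral_nonneg_of_ae (hM.mono fun a ha ↦ ha.2 x)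

/-- **Bochner subordination**: `e^{-D}` is a mixture of the `e^{-(aD)²}` over the scale `a`. -/
theorem posSemidef_exp_neg_of_sq {D : n → n → ℝ} (hD : ∀ i j, 0 ≤ D i j)
    (h : ∀ a : ℝ, (Matrix.of fun i j ↦ (Real.exp (-(a * D i j) ^ 2) : ℂ)).PosSemidef) :
    (Matrix.of fun i j ↦ (Real.exp (-D i j) : ℂ)).PosSemidef := by
  let w (t : ℝ) (i j : n) : ℝ := Real.exp (-(t ^ 2 + (D i j / 2 / t) ^ 2))
  have hw (t : ℝ) : (Matrix.of fun i j ↦ (w t i j : ℂ)).PosSemidef := by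
    convert (h (2 * t)⁻¹).smul (Real.exp_nonneg (-t ^ 2)) using 1
    ext i j
    simp only [w, Matrix.smul_apply, of_apply, Complex.real_smul, ← Complex.ofReal_mul,
      ← Real.exp_add]
    congr 2
    ring
  have hmix : (Matrix.of fun i j ↦ ∫ t in Ioi (0 : ℝ), (w t i j : ℂ)).PosSemidef :=
    posSemidef_integral (fun i j ↦ (integrable_exp_neg_sq_add_div_sq _).integrableOn.ofReal)
      (ae_of_all _ hw)
  convert hmix.smul (show 0 ≤ (√Real.pi / 2)⁻¹ by positivity) using 1
  ext i j
  simp only [w, Matrix.smul_apply, of_apply, Complex.real_smul, integral_complex_ofReal,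
    ← Complex.ofReal_mul]
  rw [integral_Ioi_exp_neg_sq_add_div_sq (div_nonneg (hD i j) zero_le_two),
    mul_div_cancel₀ _ two_ne_zero, inv_mul_cancel_left₀ (by positivity)]

variable [Finite n] {E : Type*}

/-- The elementary direction of **Bochner's theorem**. -/
theorem posSemidef_charFun_sub [SeminormedAddCommGroup E] [InnerProductSpace ℝ E]
    [MeasurableSpace E] [OpensMeasurableSpace E] (μ : Measure E) [IsFiniteMeasure μ]
    (v : n → E) : (Matrix.of fun i j ↦ charFun μ (v i - v j)).PosSemidef := by
  let e (w : E) (i : n) : ℂ := Complex.exp ((inner ℝ w (v i) : ℝ) * Complex.I)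
  have hentry (w : E) (i j : n) : vecMulVec (e w) (star (e w)) i j =
      Complex.exp ((inner ℝ w (v i - v j) : ℝ) * Complex.I) := by
    simp only [vecMulVec_apply, Pi.star_apply, e, RCLike.star_def, ← Complex.exp_conj, map_mul,
      Complex.conj_ofReal, Complex.conj_I, ← Complex.exp_add, inner_sub_right, Complex.ofReal_sub]
    ring_nf
  have hint (i j : n) : Integrable (fun w ↦ vecMulVec (e w) (star (e w)) i j) μ := by
    simp only [hentry]
    refine .of_bound (C := 1) (by fun_prop) (ae_of_all _ fun w ↦ ?_)
    rw [Complex.norm_exp_ofReal_mul_I]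
  simpa only [hentry, ← charFun_apply] using
    posSemidef_integral hint (ae_of_all _ fun w ↦ posSemidef_vecMulVec_self_star (e w))

variable [NormedAddCommGroup E] [InnerProductSpace ℝ E]

lemma posSemidef_exp_neg_norm_sub_sq_div_two (v : n → E) :
    (Matrix.of fun i j ↦ (Real.exp (-‖v i - v j‖ ^ 2 / 2) : ℂ)).PosSemidef := by
  -- Gaussian measures need finite dimension, and finitely many points span such a subspace.
  let V := Submodule.span ℝ (range v)
  have : FiniteDimensional ℝ V := FiniteDimensional.span_of_finite ℝ (finite_range v)
  borelize ↥V
  let v' (i : n) : V := ⟨v i, Submodule.subset_span (mem_range_self i)⟩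
  simpa [charFun_stdGaussian, v'] using posSemidef_charFun_sub (stdGaussian V) v'

lemma posSemidef_exp_neg_mul_norm_sub_sq (v : n → E) (a : ℝ) :
    (Matrix.of fun i j ↦ (Real.exp (-(a * ‖v i - v j‖) ^ 2) : ℂ)).PosSemidef := by
  convert posSemidef_exp_neg_norm_sub_sq_div_two fun i ↦ (√2 * a) • v i using 6 with i j
  rw [← smul_sub, norm_smul, mul_pow, mul_pow, Real.norm_eq_abs, sq_abs, mul_pow,
    Real.sq_sqrt zero_le_two]
  ring

theorem posSemidef_exp_neg_mul_norm_sub (v : n → E) {a : ℝ} (ha : 0 ≤ a) :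
    (Matrix.of fun i j ↦ (Real.exp (-(a * ‖v i - v j‖)) : ℂ)).PosSemidef := by
  refine posSemidef_exp_neg_of_sq (fun i j ↦ by positivity) fun b ↦ ?_
  simpa only [mul_assoc] using posSemidef_exp_neg_mul_norm_sub_sq v (b * a)

end PosSemidef

theorem stmt_13_general {ι E : Type*} [Fintype ι] [NormedAddCommGroup E] [InnerProductSpace ℝ E]
    {σ : ℝ} (hσ : 0 < σ) (x : ι → E) (c : ι → ℂ) :
    0 ≤ ∑ i, ∑ j, c i * (starRingEnd ℂ) (c j) * (Real.exp (-‖x j - x i‖ / σ) : ℂ) := by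
  have hK := posSemidef_exp_neg_mul_norm_sub x (inv_nonneg.2 hσ.le)
  have h := hK.dotProduct_mulVec_nonneg (star c)
  simp only [dotProduct, mulVec, Finset.mul_sum, star_star, of_apply, Pi.star_apply] at h
  convert h using 3 with i _ j _
  rw [norm_sub_rev, RCLike.star_def, neg_div, div_eq_inv_mul]
  ring

/-- For every dimension `d ≥ 1` and every `σ > 0`, the Abel kernel
`K(x,y) = exp(−‖x − y‖/σ)` on `ℝ^d` (Euclidean norm) is of positive type: for all `N`, all
`x₁, …, x_N ∈ ℝ^d` and all `c₁, …, c_N ∈ ℂ`,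
`Σ_{i,j} c_i conj(c_j) exp(−‖x_j − x_i‖/σ)` is a nonnegative real number. -/
theorem stmt_13 {d : ℕ} (hd : 1 ≤ d) (σ : ℝ) (hσ : 0 < σ) :
    ∀ (N : ℕ) (x : Fin N → EuclideanSpace ℝ (Fin d)) (c : Fin N → ℂ),
      0 ≤ ∑ i, ∑ j, c i * (starRingEnd ℂ) (c j) *
        (Real.exp (-‖x j - x i‖ / σ) : ℂ) :=
  fun _ ↦ stmt_13_general hσ
end

section
/- Let (X, d) be a compact metric space, F : X → [0,1] a continuous function whose level set S = {x ∈ X : F(x) = 1} is nonempty, and (F_n)_{n≥1} a sequence of continuous functions F_n : X → [0,1]. Let (τ_n)_{n≥1} be positive numbers with lim_{n→∞} τ_n = 0 and such that sup_{x∈X} |F_n(x) − F(x)| ≤ τ_n for all sufficiently large n. Define S_n = {x ∈ X : F_n(x) ≥ 1 − τ_n}. Then the Hausdorff distance d_H(S_n, S) = max{ sup_{a∈S_n} dist(a, S), sup_{b∈S} dist(b, S_n) } converges to 0 as n → ∞. -/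
open Filter

/-!
Uniform `τ`-closeness sandwiches the estimated level set,
`{1 ≤ F} ⊆ {1 - τ ≤ Fₙ} ⊆ {1 - 2τ ≤ F}`, so the Hausdorff distance is controlled by the outer set
alone. Upper semicontinuity makes that set shrink to `{1 ≤ F}`: off a neighbourhood of `{1 ≤ F}`,
compactness provides a maximum of `F`, and this maximum is strictly below `1`.
-/

open Topology

section HausdorffDist

variable {X : Type*} [PseudoMetricSpace X]

theorem hausdorffDist_le_of_subset_of_subset_thickening {s t : Set X} {r : ℝ} (hr : 0 ≤ r)
    (hst : s ⊆ t) (hts : t ⊆ Metric.thickening r s) : Metric.hausdorffDist t s ≤ r := by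
  refine Metric.hausdorffDist_le_of_mem_dist hr (fun x hx => ?_) fun y hy =>
    ⟨y, hst hy, (dist_self y).trans_le hr⟩
  obtain ⟨y, hy, hxy⟩ := Metric.mem_thickening_iff.mp (hts hx)
  exact ⟨y, hy, hxy.le⟩

theorem tendsto_hausdorffDist_of_tendsto_smallSets_nhdsSet {ι : Type*} {l : Filter ι} {s : Set X}
    {t : ι → Set X} (hst : ∀ᶠ i in l, s ⊆ t i) (ht : Tendsto t l (𝓝ˢ s).smallSets) :
    Tendsto (fun i => Metric.hausdorffDist (t i) s) l (𝓝 0) := by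
  refine Metric.nhds_basis_closedBall.tendsto_right_iff.mpr fun ε hε => ?_
  filter_upwards [hst, tendsto_smallSets_iff.mp ht _ (Metric.thickening_mem_nhdsSet s hε)]
    with i hsi hti
  rw [mem_closedBall_zero_iff, Real.norm_of_nonneg Metric.hausdorffDist_nonneg]
  exact hausdorffDist_le_of_subset_of_subset_thickening hε.le hsi hti

end HausdorffDist

section Superlevel

variable {X : Type*}

theorem superlevel_subset_superlevel_sub_of_abs_sub_le {α : Type*} [AddCommGroup α] [LinearOrder α]
    [IsOrderedAddMonoid α] {f g : X → α} {ε : α} (hfg : ∀ x, |f x - g x| ≤ ε) (c : α) :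
    {x | c ≤ f x} ⊆ {x | c - ε ≤ g x} :=
  fun x (hx : c ≤ f x) => (sub_le_sub_right hx ε).trans (sub_le_comm.mp (abs_le.mp (hfg x)).2)

theorem tendsto_superlevel_smallSets_nhdsSet [TopologicalSpace X] [CompactSpace X] {α : Type*}
    [LinearOrder α] [TopologicalSpace α] [ClosedIicTopology α] {f : X → α}
    (hf : UpperSemicontinuous f) (c : α) :
    Tendsto (fun a => {x | a ≤ f x}) (𝓝 c) (𝓝ˢ {x | c ≤ f x}).smallSets := by
  refine (hasBasis_nhdsSet _).smallSets.tendsto_right_iff.mpr fun U ⟨hU, hcU⟩ => ?_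
  rcases Uᶜ.eq_empty_or_nonempty with hempty | hne
  · simp [Set.compl_empty_iff.mp hempty]
  obtain ⟨m, hmU, hmax⟩ :=
    (hf.upperSemicontinuousOn _).exists_isMaxOn hne hU.isClosed_compl.isCompact
  have hmc : f m < c := not_le.mp fun hcm => hmU (hcU hcm)
  filter_upwards [eventually_gt_nhds hmc] with a hma x hax
  by_contra hxU
  exact (hma.trans_le hax).not_ge (hmax hxU)

end Superlevel

theorem stmt_19_general {X ι : Type*} [PseudoMetricSpace X] [CompactSpace X] {l : Filter ι}
    {f : X → ℝ} (hf : UpperSemicontinuous f) {g : ι → X → ℝ} {τ : ι → ℝ}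
    (hτ : Tendsto τ l (𝓝 0)) (hfg : ∀ᶠ i in l, ∀ x, |g i x - f x| ≤ τ i) (c : ℝ) :
    Tendsto (fun i => Metric.hausdorffDist {x | c - τ i ≤ g i x} {x | c ≤ f x}) l (𝓝 0) := by
  have hinner : ∀ᶠ i in l, {x | c ≤ f x} ⊆ {x | c - τ i ≤ g i x} := hfg.mono fun i hi =>
    superlevel_subset_superlevel_sub_of_abs_sub_le (fun x => abs_sub_comm (f x) _ ▸ hi x) c
  have houter : ∀ᶠ i in l, {x | c - τ i ≤ g i x} ⊆ {x | c - τ i - τ i ≤ f x} :=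
    hfg.mono fun i hi => superlevel_subset_superlevel_sub_of_abs_sub_le hi _
  have hlevel : Tendsto (fun i => c - τ i - τ i) l (𝓝 c) := by
    simpa only [sub_zero] using (hτ.const_sub c).sub hτ
  exact tendsto_hausdorffDist_of_tendsto_smallSets_nhdsSet hinner
    (((tendsto_superlevel_smallSets_nhdsSet hf c).comp hlevel).smallSets_mono houter)

/-- Let `(X, d)` be a compact metric space, `F : X → [0,1]` continuous
with nonempty level set `S = {x : F(x) = 1}`, and `(F_n)` continuous functions
`X → [0,1]`.  Let `τ_n > 0` with `τ_n → 0` and `sup_x |F_n(x) − F(x)| ≤ τ_n` for all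
sufficiently large `n`.  With `S_n = {x : F_n(x) ≥ 1 − τ_n}`, the Hausdorff distance
`d_H(S_n, S)` converges to `0` as `n → ∞`. -/
theorem stmt_19 {X : Type*} [MetricSpace X] [CompactSpace X]
    (F : X → ℝ) (hFcont : Continuous F) (hFrange : ∀ x, F x ∈ Set.Icc (0 : ℝ) 1)
    (hSne : {x : X | F x = 1}.Nonempty)
    (Fn : ℕ → X → ℝ) (hFncont : ∀ n, Continuous (Fn n))
    (hFnrange : ∀ n x, Fn n x ∈ Set.Icc (0 : ℝ) 1)
    (τ : ℕ → ℝ) (hτpos : ∀ n, 0 < τ n)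
    (hτ0 : Tendsto τ atTop (nhds 0))
    (hunif : ∀ᶠ n in atTop, ∀ x, |Fn n x - F x| ≤ τ n) :
    Tendsto (fun n : ℕ =>
        Metric.hausdorffDist {x : X | 1 - τ n ≤ Fn n x} {x : X | F x = 1})
      atTop (nhds 0) := by
  have hS : {x | F x = 1} = {x | 1 ≤ F x} := Set.ext fun x => (hFrange x).2.ge_iff_eq.symm
  rw [hS]
  exact stmt_19_general hFcont.upperSemicontinuous hτ0 hunif 1
end
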